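/- Fix α > 0 and suppose that for every β > 0 an eigen-measure ν_β for (α,β) with exponent P(β) is given. Then ν_β converges weakly to the Dirac measure δ_{0^∞} as β → +∞. -/

import Mathlib

/-!
Writing `r_a(n) = ν [a^n *_a]` and `c_0 = 1`, `c_1 = 3`, testing the eigen-measure equation on
indicators of rings gives `e^P r_a(n+1) = exp(-c_a β 2^{-(n+1)}) r_a(n)`, where
`r_a(0) = 1 - ν [a]`. Comparing the two recursions (`ring_compare`) yields
`r_0(0) · r_1(n) ≤ e^{-β} r_1(0) · r_0(n)` for `n ≥ 1`. As `P > 0`, the point `1^∞` carries no mass,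
so summing over `n` gives `(1 - ν [0]) · ν [1] ≤ e^{-β}`; since `ν [1] ≤ 1 - ν [0]`, this forces
`ν [1] ≤ e^{-β/2}` (`cyl_one_le`). Also `ν [2] ≤ e^{-αβ}` (`cyl_two_le`). Hence `1 - ν [0] → 0`, and
because `r_0` is nonincreasing, `1 - ν [0^m] ≤ m (1 - ν [0]) → 0` for every `m`. The sets `[0^m]`
form a neighbourhood basis of `0^∞`, whence weak convergence to the Dirac measure.
-/

open MeasureTheory Filter Topology

noncomputable section

/-- The full shift space `Σ = {0,1,2}^ℕ`. -/
abbrev Sig : Type := ℕ → Fin 3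

/-- The shift map `σ`. -/
def shift (x : Sig) : Sig := fun n => x (n + 1)

/-- The fixed point `0^∞`. -/
def zeroSeq : Sig := fun _ => 0

/-- The fixed point `1^∞`. -/
def oneSeq : Sig := fun _ => 1

/-- Prepending a symbol: `a·x = (a, x₀, x₁, …)`. -/
def cons (a : Fin 3) (x : Sig) : Sig := fun n => Nat.casesOn n a x

open Classical in
/-- The metric `d(x,y) = (1/2)^(min{n : x n ≠ y n})`, with `d(x,x) = 0`. -/
def dist3 (x y : Sig) : ℝ :=
  if h : x ≠ y then (1 / 2 : ℝ) ^ Nat.find (Function.ne_iff.mp h) else 0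

/-- The potential `A_α`. -/
def pot (α : ℝ) (x : Sig) : ℝ :=
  if x 0 = 0 then -dist3 x zeroSeq
  else if x 0 = 1 then -(3 * dist3 x oneSeq)
  else -α

/-- The transfer operator `L_β` (for parameter `α`). -/
def transfer (α β : ℝ) (f : Sig → ℝ) : Sig → ℝ :=
  fun x => ∑ a : Fin 3, Real.exp (β * pot α (cons a x)) * f (cons a x)

/-- The ring `[a^n *_a] = {x : x_i = a for i < n, x_n ≠ a}`. -/
def ringSet (a : Fin 3) (n : ℕ) : Set Sig := {x | (∀ i < n, x i = a) ∧ x n ≠ a}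

/-- The cylinder `[a] = {x : x₀ = a}`. -/
def cyl (a : Fin 3) : Set Sig := {x | x 0 = a}

/-- `H` is locally ring-constant: constant on `[2]` and on each ring `[0^m*₀]`, `[1^m*₁]`. -/
def LocallyRingConstant (H : Sig → ℝ) : Prop :=
  (∀ x ∈ cyl 2, ∀ y ∈ cyl 2, H x = H y) ∧
  (∀ m : ℕ, 1 ≤ m → ∀ x ∈ ringSet 0 m, ∀ y ∈ ringSet 0 m, H x = H y) ∧
  (∀ m : ℕ, 1 ≤ m → ∀ x ∈ ringSet 1 m, ∀ y ∈ ringSet 1 m, H x = H y)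

/-- An eigen-measure for `(α,β)` with exponent `P`:  a Borel probability measure `ν`
with `P > 0` and `∫ L_β f dν = e^P ∫ f dν` for every continuous `f`. -/
structure IsEigenMeasure (α β P : ℝ) (ν : Measure Sig) : Prop where
  P_pos : 0 < P
  prob : IsProbabilityMeasure ν
  eigenMeas : ∀ f : Sig → ℝ, Continuous f →
    ∫ x, transfer α β f x ∂ν = Real.exp P * ∫ x, f x ∂ν

/-- Eigen-data `(P, H, ν)` for `(α,β)`. -/
structure IsEigenData (α β P : ℝ) (H : Sig → ℝ) (ν : Measure Sig) : Prop where
  P_pos : 0 < P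
  H_cont : Continuous H
  H_pos : ∀ x, 0 < H x
  eigenFun : ∀ x, transfer α β H x = Real.exp P * H x
  prob : IsProbabilityMeasure ν
  eigenMeas : ∀ f : Sig → ℝ, Continuous f →
    ∫ x, transfer α β f x ∂ν = Real.exp P * ∫ x, f x ∂ν

/-- The Gibbs measure `μ(B) = (∫_B H dν)/(∫ H dν)`. -/
def gibbs (H : Sig → ℝ) (ν : Measure Sig) : Measure Sig :=
  (ν.withDensity (fun x => ENNReal.ofReal (H x)) Set.univ)⁻¹ •
    ν.withDensity (fun x => ENNReal.ofReal (H x))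

/-- Weak convergence (as `β → +∞`) of a family of measures to a measure `μ∞`:
convergence of integrals of every bounded continuous function. -/
def WeakLimit (μ : ℝ → Measure Sig) (μlim : Measure Sig) : Prop :=
  ∀ f : Sig → ℝ, Continuous f → (∃ C : ℝ, ∀ x, |f x| ≤ C) →
    Tendsto (fun β => ∫ x, f x ∂(μ β)) atTop (nhds (∫ x, f x ∂μlim))

/-- `F(Z,β) = Σ_{k=0}^∞ e^{−kZ}·e^{β/2^{k+1}}`. -/
def Ffun (Z β : ℝ) : ℝ := ∑' k : ℕ, Real.exp (-(k : ℝ) * Z) * Real.exp (β / 2 ^ (k + 1))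

/-- `Fpartial Z β m = F_{m-1}(Z,β) = Σ_{k=0}^{m-1} e^{−kZ}·e^{β/2^{k+1}}` (so `Fpartial Z β 0 = F_{-1} = 0`). -/
def Fpartial (Z β : ℝ) (m : ℕ) : ℝ :=
  ∑ k ∈ Finset.range m, Real.exp (-(k : ℝ) * Z) * Real.exp (β / 2 ^ (k + 1))

/-! ### The potential on rings -/

/-- The cylinder `[a^n] = {x : x_i = a for i < n}`. -/
def powCyl (a : Fin 3) (n : ℕ) : Set Sig := {x | ∀ i < n, x i = a}

@[simp] lemma cons_zero (a : Fin 3) (x : Sig) : cons a x 0 = a := rfl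

@[simp] lemma cons_succ (a : Fin 3) (x : Sig) (n : ℕ) : cons a x (n + 1) = x n := rfl

lemma isClopen_coord (a : Fin 3) (n : ℕ) : IsClopen {x : Sig | x n = a} :=
  (isClopen_discrete ({a} : Set (Fin 3))).preimage (continuous_apply n)

lemma isClopen_powCyl (a : Fin 3) (n : ℕ) : IsClopen (powCyl a n) := by
  have : powCyl a n = ⋂ i ∈ Finset.range n, {x : Sig | x i = a} := by
    ext x; simp [powCyl]
  rw [this]
  exact isClopen_biInter_finset fun i _ => isClopen_coord a i

lemma ringSet_eq_diff (a : Fin 3) (n : ℕ) : ringSet a n = powCyl a n \ powCyl a (n + 1) := by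
  ext x
  simp only [ringSet, powCyl, Set.mem_ofPred_eq, Set.mem_sdiff]
  constructor
  · rintro ⟨h, h'⟩
    exact ⟨h, fun h2 => h' (h2 n (Nat.lt_succ_self n))⟩
  · rintro ⟨h, h'⟩
    refine ⟨h, fun h2 => h' fun i hi => ?_⟩
    rcases Nat.lt_succ_iff_lt_or_eq.mp hi with h3 | rfl
    · exact h i h3
    · exact h2

lemma isClopen_ringSet (a : Fin 3) (n : ℕ) : IsClopen (ringSet a n) := by
  rw [ringSet_eq_diff]
  exact (isClopen_powCyl a n).diff (isClopen_powCyl a (n + 1))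

lemma powCyl_succ_subset (a : Fin 3) (n : ℕ) : powCyl a (n + 1) ⊆ powCyl a n :=
  fun _ hx i hi => hx i (Nat.lt_succ_of_lt hi)

lemma cons_mem_ringSet (a : Fin 3) (n : ℕ) (x : Sig) :
    cons a x ∈ ringSet a (n + 1) ↔ x ∈ ringSet a n := by
  simp only [ringSet, Set.mem_ofPred_eq, cons_succ]
  refine and_congr_left fun _ => ⟨fun h i hi => h (i + 1) (by omega), fun h i hi => ?_⟩
  cases i with
  | zero => rfl
  | succ i => exact h i (by omega)

lemma cons_mem_powCyl (a : Fin 3) (n : ℕ) (x : Sig) :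
    cons a x ∈ powCyl a (n + 1) ↔ x ∈ powCyl a n := by
  simp only [powCyl, Set.mem_ofPred_eq]
  refine ⟨fun h i hi => h (i + 1) (by omega), fun h i hi => ?_⟩
  cases i with
  | zero => rfl
  | succ i => exact h i (by omega)

lemma dist3_nonneg (x y : Sig) : 0 ≤ dist3 x y := by
  unfold dist3
  split_ifs <;> positivity

lemma dist3_ringSet {a : Fin 3} {n : ℕ} {x : Sig} (hx : x ∈ ringSet a n) :
    dist3 x (fun _ => a) = (1 / 2) ^ n := by
  have hne : x ≠ fun _ => a := fun h => hx.2 (congrFun h n)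
  unfold dist3
  rw [dif_pos hne]
  congr 1
  rw [Nat.find_eq_iff]
  exact ⟨hx.2, fun i hi => by simpa using hx.1 i hi⟩

lemma pot_nonpos {α : ℝ} (hα : 0 < α) (x : Sig) : pot α x ≤ 0 := by
  unfold pot
  have h0 := dist3_nonneg x zeroSeq
  have h1 := dist3_nonneg x oneSeq
  split_ifs <;> linarith

lemma pot_cons_zero {α : ℝ} {n : ℕ} {x : Sig} (hx : x ∈ ringSet 0 n) :
    pot α (cons 0 x) = -(1 / 2) ^ (n + 1) := by
  have hd : dist3 (cons 0 x) zeroSeq = _ := dist3_ringSet ((cons_mem_ringSet 0 n x).mpr hx)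
  simp only [pot, cons_zero, if_true, hd]

lemma pot_cons_one {α : ℝ} {n : ℕ} {x : Sig} (hx : x ∈ ringSet 1 n) :
    pot α (cons 1 x) = -(3 * (1 / 2) ^ (n + 1)) := by
  have hd : dist3 (cons 1 x) oneSeq = _ := dist3_ringSet ((cons_mem_ringSet 1 n x).mpr hx)
  simp [pot, hd]

lemma pot_cons_two {α : ℝ} (x : Sig) : pot α (cons 2 x) = -α := by
  simp [pot]

/-! ### Consequences of the eigen-measure equation -/

/-- If `S` consists of sequences starting with `a` and `T = {x : a·x ∈ S}`, then
`L_β 1_S (x) = e^{β A(a·x)} 1_T(x)`. -/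
lemma transfer_indicator (α β : ℝ) {a : Fin 3} {S T : Set Sig} (hS : ∀ x ∈ S, x 0 = a)
    (hT : ∀ x, cons a x ∈ S ↔ x ∈ T) (x : Sig) :
    transfer α β (S.indicator 1) x
      = Real.exp (β * pot α (cons a x)) * T.indicator (1 : Sig → ℝ) x := by
  unfold transfer
  rw [Finset.sum_eq_single a]
  · congr 1
    by_cases h : x ∈ T
    · simp [h, (hT x).mpr h]
    · simp [h, mt (hT x).mp h]
  · intro b _ hb
    rw [Set.indicator_of_notMem (fun h => hb (hS _ h)), mul_zero]
  · simp

lemma eigen_clopen {α β P : ℝ} {ν : Measure Sig} (h : IsEigenMeasure α β P ν) {S : Set Sig}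
    (hS : IsClopen S) :
    ∫ x, transfer α β (S.indicator 1) x ∂ν = Real.exp P * ν.real S := by
  rw [h.eigenMeas _ (continuous_one.indicator (by simp [hS.frontier_eq])),
    integral_indicator_one hS.isOpen.measurableSet]

/-- Conformality on a clopen set whose branch weight is the constant `w`. -/
lemma eigen_const {α β P : ℝ} {ν : Measure Sig} (h : IsEigenMeasure α β P ν) {a : Fin 3}
    {S T : Set Sig} (hSc : IsClopen S) (hTc : IsClopen T) (hS : ∀ x ∈ S, x 0 = a)
    (hT : ∀ x, cons a x ∈ S ↔ x ∈ T) {w : ℝ}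
    (hw : ∀ x ∈ T, Real.exp (β * pot α (cons a x)) = w) :
    Real.exp P * ν.real S = w * ν.real T := by
  rw [← eigen_clopen h hSc, ← integral_indicator_one hTc.isOpen.measurableSet,
    ← integral_const_mul]
  refine integral_congr_ae (.of_forall fun x => ?_)
  simp only [transfer_indicator α β hS hT]
  by_cases hx : x ∈ T
  · rw [hw x hx]
  · simp [hx]

lemma ring_zero_rec {α β P : ℝ} {ν : Measure Sig} (h : IsEigenMeasure α β P ν) (n : ℕ) :
    Real.exp P * ν.real (ringSet 0 (n + 1))
      = Real.exp (-(β * (1 / 2) ^ (n + 1))) * ν.real (ringSet 0 n) := by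
  refine eigen_const h (isClopen_ringSet _ _) (isClopen_ringSet _ _)
    (fun x hx => hx.1 0 (Nat.succ_pos n)) (cons_mem_ringSet 0 n) fun x hx => ?_
  rw [pot_cons_zero hx, mul_neg]

lemma ring_one_rec {α β P : ℝ} {ν : Measure Sig} (h : IsEigenMeasure α β P ν) (n : ℕ) :
    Real.exp P * ν.real (ringSet 1 (n + 1))
      = Real.exp (-(3 * β * (1 / 2) ^ (n + 1))) * ν.real (ringSet 1 n) := by
  refine eigen_const h (isClopen_ringSet _ _) (isClopen_ringSet _ _)
    (fun x hx => hx.1 0 (Nat.succ_pos n)) (cons_mem_ringSet 1 n) fun x hx => ?_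
  rw [pot_cons_one hx]
  congr 1; ring

lemma cyl_two_le {α β P : ℝ} {ν : Measure Sig} (h : IsEigenMeasure α β P ν) :
    ν.real (cyl 2) ≤ Real.exp (-(α * β)) := by
  have := h.prob
  have h1 : Real.exp P * ν.real (cyl 2) = Real.exp (-(α * β)) * ν.real Set.univ :=
    eigen_const h (isClopen_coord 2 0) isClopen_univ (fun x hx => hx)
      (fun x => by simp) fun x _ => by rw [pot_cons_two]; congr 1; ring
  rw [probReal_univ, mul_one] at h1
  have h2 : 1 ≤ Real.exp P := Real.one_le_exp h.P_pos.le
  have h3 : 0 ≤ ν.real (cyl 2) := measureReal_nonneg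
  nlinarith

lemma powCyl_succ_le {α β P : ℝ} {ν : Measure Sig} (hα : 0 < α) (hβ : 0 < β)
    (h : IsEigenMeasure α β P ν) (a : Fin 3) (n : ℕ) :
    Real.exp P * ν.real (powCyl a (n + 1)) ≤ ν.real (powCyl a n) := by
  have := h.prob
  rw [← eigen_clopen h (isClopen_powCyl a (n + 1)),
    ← integral_indicator_one (isClopen_powCyl a n).isOpen.measurableSet]
  have key := transfer_indicator α β (S := powCyl a (n + 1))
    (fun x hx => hx 0 (Nat.succ_pos n)) (cons_mem_powCyl a n)
  have hnn : ∀ x, 0 ≤ (powCyl a n).indicator (1 : Sig → ℝ) x :=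
    fun x => Set.indicator_nonneg (fun _ _ => zero_le_one) x
  refine integral_mono_of_nonneg (.of_forall fun x => ?_) ?_ (.of_forall fun x => ?_)
  · simp only [key, Pi.zero_apply]
    exact mul_nonneg (Real.exp_nonneg _) (hnn x)
  · exact (integrable_const (1 : ℝ)).indicator (isClopen_powCyl a n).isOpen.measurableSet
  · simp only [key]
    refine mul_le_of_le_one_left (hnn x) (Real.exp_le_one_iff.mpr ?_)
    exact mul_nonpos_of_nonneg_of_nonpos hβ.le (pot_nonpos hα _)

/-- Since `P > 0`, the cylinders `[a^n]` shrink to a null set. -/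
lemma tendsto_powCyl {α β P : ℝ} {ν : Measure Sig} (hα : 0 < α) (hβ : 0 < β)
    (h : IsEigenMeasure α β P ν) (a : Fin 3) :
    Tendsto (fun n => ν.real (powCyl a n)) atTop (𝓝 0) := by
  have := h.prob
  have hb : ∀ n, ν.real (powCyl a n) ≤ Real.exp (-P) ^ n := by
    intro n
    induction n with
    | zero => simp
    | succ n ih =>
      have h1 := powCyl_succ_le hα hβ h a n
      calc ν.real (powCyl a (n + 1))
          = Real.exp (-P) * (Real.exp P * ν.real (powCyl a (n + 1))) := by
            rw [← mul_assoc, ← Real.exp_add]; simp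
        _ ≤ Real.exp (-P) * Real.exp (-P) ^ n := by gcongr; exact h1.trans ih
        _ = Real.exp (-P) ^ (n + 1) := by ring
  refine squeeze_zero (fun _ => measureReal_nonneg) hb
    (tendsto_pow_atTop_nhds_zero_of_lt_one (Real.exp_nonneg _) ?_)
  exact Real.exp_lt_one_iff.mpr (neg_lt_zero.mpr h.P_pos)

/-! ### Mass outside `[0]` -/

lemma measure_ringSet {ν : Measure Sig} [IsProbabilityMeasure ν] (a : Fin 3) (n : ℕ) :
    ν.real (ringSet a n) = ν.real (powCyl a n) - ν.real (powCyl a (n + 1)) := by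
  rw [ringSet_eq_diff, measureReal_sdiff (powCyl_succ_subset a n)
    (isClopen_powCyl a (n + 1)).isOpen.measurableSet]

lemma sum_ringSet {ν : Measure Sig} [IsProbabilityMeasure ν] (a : Fin 3) (n : ℕ) :
    ∑ k ∈ Finset.range n, ν.real (ringSet a (k + 1))
      = ν.real (powCyl a 1) - ν.real (powCyl a (n + 1)) := by
  simp only [measure_ringSet]
  exact Finset.sum_range_sub' (fun k => ν.real (powCyl a (k + 1))) n

/-- The first ring accounts for the factor `e^{-β}`, since `3β/2 = β + β/2`; all further
weights only favour `0`. -/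
lemma ring_compare {α β P : ℝ} {ν : Measure Sig} (hβ : 0 < β)
    (h : IsEigenMeasure α β P ν) (n : ℕ) :
    ν.real (ringSet 0 0) * ν.real (ringSet 1 (n + 1))
      ≤ Real.exp (-β) * (ν.real (ringSet 1 0) * ν.real (ringSet 0 (n + 1))) := by
  have hP := Real.exp_pos P
  induction n with
  | zero =>
    have h0 := ring_zero_rec h 0
    have h1 := ring_one_rec h 0
    have he : Real.exp (-(3 * β * (1 / 2) ^ (0 + 1)))
        = Real.exp (-β) * Real.exp (-(β * (1 / 2) ^ (0 + 1))) := by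
      rw [← Real.exp_add]; congr 1; ring
    rw [he] at h1
    refine le_of_mul_le_mul_left (le_of_eq ?_) hP
    linear_combination ν.real (ringSet 0 0) * h1 - Real.exp (-β) * ν.real (ringSet 1 0) * h0
  | succ n ih =>
    have h0 := ring_zero_rec h (n + 1)
    have h1 := ring_one_rec h (n + 1)
    have he : Real.exp (-(3 * β * (1 / 2) ^ (n + 1 + 1)))
        ≤ Real.exp (-(β * (1 / 2) ^ (n + 1 + 1))) := by
      apply Real.exp_le_exp.mpr
      have : 0 < β * (1 / 2) ^ (n + 1 + 1) := by positivity
      linarith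
    refine le_of_mul_le_mul_left ?_ hP
    calc Real.exp P * (ν.real (ringSet 0 0) * ν.real (ringSet 1 (n + 1 + 1)))
        = Real.exp (-(3 * β * (1 / 2) ^ (n + 1 + 1)))
          * (ν.real (ringSet 0 0) * ν.real (ringSet 1 (n + 1))) := by
          linear_combination ν.real (ringSet 0 0) * h1
      _ ≤ Real.exp (-(β * (1 / 2) ^ (n + 1 + 1)))
          * (Real.exp (-β) * (ν.real (ringSet 1 0) * ν.real (ringSet 0 (n + 1)))) := by
          gcongr
      _ = Real.exp P
          * (Real.exp (-β) * (ν.real (ringSet 1 0) * ν.real (ringSet 0 (n + 1 + 1)))) := by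
          linear_combination -Real.exp (-β) * ν.real (ringSet 1 0) * h0

lemma cyl_one_mul_le {α β P : ℝ} {ν : Measure Sig} (hα : 0 < α) (hβ : 0 < β)
    (h : IsEigenMeasure α β P ν) :
    ν.real (ringSet 0 0) * ν.real (powCyl 1 1) ≤ Real.exp (-β) := by
  have := h.prob
  have hlim : Tendsto (fun n => ν.real (ringSet 0 0)
      * (ν.real (powCyl 1 1) - ν.real (powCyl 1 (n + 1)))) atTop
      (𝓝 (ν.real (ringSet 0 0) * (ν.real (powCyl 1 1) - 0))) :=
    ((tendsto_const_nhds.sub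
      ((tendsto_add_atTop_iff_nat 1).mpr (tendsto_powCyl hα hβ h 1)))).const_mul _
  rw [sub_zero] at hlim
  refine le_of_tendsto' hlim fun n => ?_
  have hs : ν.real (powCyl 0 1) - ν.real (powCyl 0 (n + 1)) ≤ 1 :=
    (sub_le_self _ measureReal_nonneg).trans measureReal_le_one
  have hs0 : 0 ≤ ν.real (powCyl 0 1) - ν.real (powCyl 0 (n + 1)) := by
    rw [← sum_ringSet]; exact Finset.sum_nonneg fun _ _ => measureReal_nonneg
  calc ν.real (ringSet 0 0) * (ν.real (powCyl 1 1) - ν.real (powCyl 1 (n + 1)))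
      ≤ Real.exp (-β) * (ν.real (ringSet 1 0)
          * (ν.real (powCyl 0 1) - ν.real (powCyl 0 (n + 1)))) := by
        rw [← sum_ringSet, ← sum_ringSet, Finset.mul_sum, Finset.mul_sum, Finset.mul_sum]
        exact Finset.sum_le_sum fun k _ => ring_compare hβ h k
    _ ≤ Real.exp (-β) * 1 := by
        gcongr
        exact mul_le_one₀ measureReal_le_one hs0 hs
    _ = Real.exp (-β) := mul_one _

lemma cyl_one_le {α β P : ℝ} {ν : Measure Sig} (hα : 0 < α) (hβ : 0 < β)
    (h : IsEigenMeasure α β P ν) : ν.real (powCyl 1 1) ≤ Real.exp (-(β / 2)) := by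
  have := h.prob
  have hsub : powCyl 1 1 ⊆ ringSet 0 0 := fun x hx =>
    ⟨fun i hi => absurd hi (Nat.not_lt_zero i), by rw [hx 0 Nat.one_pos]; decide⟩
  have h1 : ν.real (powCyl 1 1) ≤ ν.real (ringSet 0 0) := measureReal_mono hsub
  have h2 := cyl_one_mul_le hα hβ h
  have h3 : 0 ≤ ν.real (powCyl 1 1) := measureReal_nonneg
  refine le_of_sq_le_sq ?_ (Real.exp_nonneg _)
  rw [← Real.exp_nat_mul]
  calc ν.real (powCyl 1 1) ^ 2 ≤ ν.real (ringSet 0 0) * ν.real (powCyl 1 1) := by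
        rw [sq]; gcongr
    _ ≤ Real.exp (-β) := h2
    _ = _ := by congr 1; push_cast; ring

lemma ring_zero_zero_le {α β P : ℝ} {ν : Measure Sig} (hα : 0 < α) (hβ : 0 < β)
    (h : IsEigenMeasure α β P ν) :
    ν.real (ringSet 0 0) ≤ Real.exp (-(β / 2)) + Real.exp (-(α * β)) := by
  have := h.prob
  have hsub : ringSet 0 0 ⊆ powCyl 1 1 ∪ cyl 2 := by
    rintro x ⟨-, hx⟩
    have : x 0 = 1 ∨ x 0 = 2 := by omega
    refine this.imp (fun h i hi => ?_) id
    obtain rfl : i = 0 := by omega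
    exact h
  exact (measureReal_mono hsub).trans ((measureReal_union_le _ _).trans
    (add_le_add (cyl_one_le hα hβ h) (cyl_two_le h)))

lemma compl_powCyl_le {α β P : ℝ} {ν : Measure Sig} (hβ : 0 < β)
    (h : IsEigenMeasure α β P ν) (m : ℕ) :
    ν.real (powCyl 0 m)ᶜ ≤ m * ν.real (ringSet 0 0) := by
  have := h.prob
  have hanti : Antitone fun n => ν.real (ringSet 0 n) := by
    refine antitone_nat_of_succ_le fun n => ?_
    have h1 := ring_zero_rec h n
    have h2 : 1 ≤ Real.exp P := Real.one_le_exp h.P_pos.le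
    have h3 : Real.exp (-(β * (1 / 2) ^ (n + 1))) ≤ 1 :=
      Real.exp_le_one_iff.mpr (neg_nonpos.mpr (by positivity))
    have h4 : 0 ≤ ν.real (ringSet 0 n) := measureReal_nonneg
    have h5 : 0 ≤ ν.real (ringSet 0 (n + 1)) := measureReal_nonneg
    nlinarith
  have hu : powCyl 0 0 = Set.univ := by ext x; simp [powCyl]
  have hsum : ν.real (powCyl 0 m)ᶜ = ∑ k ∈ Finset.range m, ν.real (ringSet 0 k) := by
    simp only [measure_ringSet]
    rw [Finset.sum_range_sub' (fun k => ν.real (powCyl 0 k)) m, hu,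
      probReal_compl_eq_one_sub (isClopen_powCyl 0 m).isOpen.measurableSet, probReal_univ]
  rw [hsum]
  calc ∑ k ∈ Finset.range m, ν.real (ringSet 0 k)
      ≤ ∑ _k ∈ Finset.range m, ν.real (ringSet 0 0) :=
        Finset.sum_le_sum fun k _ => hanti (Nat.zero_le k)
    _ = m * ν.real (ringSet 0 0) := by simp

/-! ### Weak convergence -/

lemma exists_powCyl_subset {U : Set Sig} (hU : U ∈ 𝓝 zeroSeq) : ∃ m, powCyl 0 m ⊆ U := by
  rw [nhds_pi, Filter.mem_pi] at hU
  obtain ⟨I, hI, t, ht, htU⟩ := hU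
  obtain ⟨m, hm⟩ := hI.bddAbove
  refine ⟨m + 1, fun x hx => htU fun i hi => ?_⟩
  rw [hx i (Nat.lt_succ_of_le (hm hi))]
  exact mem_of_mem_nhds (ht i)

/-- The eigen-measures `ν_β` converge weakly to the Dirac measure `δ_{0^∞}` as `β → +∞`. -/
theorem eigenMeasure_weak_limit (α : ℝ) (hα : 0 < α)
    (P : ℝ → ℝ) (ν : ℝ → Measure Sig)
    (hE : ∀ β > (0 : ℝ), IsEigenMeasure α β (P β) (ν β)) :
    WeakLimit ν (Measure.dirac zeroSeq) := by
  intro f hf ⟨C, hC⟩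
  rw [integral_dirac, Metric.tendsto_nhds]
  intro ε hε
  have hC0 : 0 ≤ C := (abs_nonneg _).trans (hC zeroSeq)
  obtain ⟨m, hm⟩ := exists_powCyl_subset
    (hf.continuousAt.preimage_mem_nhds (Metric.ball_mem_nhds (f zeroSeq) (half_pos hε)))
  have hlim : Tendsto (fun β : ℝ => 2 * C * (m * (Real.exp (-(β / 2)) + Real.exp (-(α * β)))))
      atTop (𝓝 (2 * C * (m * (0 + 0)))) := by
    refine ((Tendsto.add ?_ ?_).const_mul _).const_mul _
    · exact Real.tendsto_exp_neg_atTop_nhds_zero.comp (tendsto_id.atTop_div_const two_pos)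
    · exact Real.tendsto_exp_neg_atTop_nhds_zero.comp (tendsto_id.const_mul_atTop hα)
  have hev := hlim.eventually_lt_const (u := ε / 2) (by simpa using half_pos hε)
  filter_upwards [hev, eventually_gt_atTop 0] with β hβε hβ
  have h := hE β hβ
  have := h.prob
  have hmeas := (isClopen_powCyl 0 m).isOpen.measurableSet
  have hint : Integrable f (ν β) :=
    Integrable.of_bound hf.aestronglyMeasurable C (.of_forall hC)
  have hind : Integrable (fun x => 2 * C * ((powCyl 0 m)ᶜ).indicator 1 x) (ν β) :=
    ((integrable_const (1 : ℝ)).indicator hmeas.compl).const_mul _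
  have hgint : Integrable (fun x => ε / 2 + 2 * C * ((powCyl 0 m)ᶜ).indicator 1 x) (ν β) :=
    (integrable_const _).add hind
  have hpt : ∀ x, ‖f x - f zeroSeq‖ ≤ ε / 2 + 2 * C * ((powCyl 0 m)ᶜ).indicator 1 x := by
    intro x
    by_cases hx : x ∈ powCyl 0 m
    · have := hm hx
      rw [Set.mem_preimage, mem_ball_iff_norm] at this
      simpa [hx] using this.le
    · have h1 := hC x
      have h2 := hC zeroSeq
      have h3 : ‖f x - f zeroSeq‖ ≤ |f x| + |f zeroSeq| := norm_sub_le _ _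
      rw [Set.indicator_of_mem (by exact hx), Pi.one_apply]
      linarith
  have hsub : ∫ x, f x ∂(ν β) - f zeroSeq = ∫ x, (f x - f zeroSeq) ∂(ν β) := by
    rw [integral_sub hint (integrable_const _)]; simp
  rw [dist_eq_norm, hsub]
  calc ‖∫ x, (f x - f zeroSeq) ∂(ν β)‖
      ≤ ∫ x, (ε / 2 + 2 * C * ((powCyl 0 m)ᶜ).indicator 1 x) ∂(ν β) :=
        norm_integral_le_of_norm_le hgint (.of_forall hpt)
    _ = ε / 2 + 2 * C * (ν β).real (powCyl 0 m)ᶜ := by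
        rw [integral_add (integrable_const _) hind,
          integral_const_mul, integral_indicator_one hmeas.compl]
        simp
    _ ≤ ε / 2 + 2 * C * (m * (Real.exp (-(β / 2)) + Real.exp (-(α * β)))) := by
        gcongr
        exact (compl_powCyl_le hβ h m).trans (by gcongr; exact ring_zero_zero_le hα hβ h)
    _ < ε := by linarith

end
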